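/- Let u, v be smooth functions on S^2 with v compactly supported in an open set U ⊂ S^2, and let α be a smooth function on U. Then ∫_U [u(∇_A∇_B v - (1/2)(Δv)σ_{AB}) - v(∇_A∇_B u - (1/2)(Δu)σ_{AB})] ∇^A∇^B α = (1/2)∫_U (uΔv - vΔu)(Δ+2)α. -/

import Mathlib

open MeasureTheory Real
noncomputable section

/-- Points of the stereographic chart of the round unit sphere `S²`
(the chart covers `S²` minus the north pole). -/
abbrev Pt := Fin 2 → ℝ

/-- Partial derivative `∂_a f`. -/
def pd (a : Fin 2) (f : Pt → ℝ) (x : Pt) : ℝ := fderiv ℝ f x (Pi.single a 1)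

/-- The round (unit sphere) metric `σ_{AB}` in stereographic coordinates. -/
def rnd (x : Pt) (a b : Fin 2) : ℝ :=
  (4 / (1 + x 0 ^ 2 + x 1 ^ 2) ^ 2) * (if a = b then 1 else 0)

/-- The inverse round metric `σ^{AB}`. -/
def rndInv (x : Pt) (a b : Fin 2) : ℝ :=
  ((1 + x 0 ^ 2 + x 1 ^ 2) ^ 2 / 4) * (if a = b then 1 else 0)

/-- The area form `ε_{AB}` of the round metric. -/
def rndE (x : Pt) (a b : Fin 2) : ℝ :=
  (4 / (1 + x 0 ^ 2 + x 1 ^ 2) ^ 2) *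
    (if a = 0 ∧ b = 1 then 1 else if a = 1 ∧ b = 0 then -1 else 0)

/-- The area form with raised indices `ε^{AB}`. -/
def rndEUp (x : Pt) (a b : Fin 2) : ℝ :=
  ∑ c, ∑ d, rndInv x a c * rndInv x b d * rndE x c d

/-- Christoffel symbols `Γ^c_{ab}` of the round metric. -/
def Gam (c a b : Fin 2) (x : Pt) : ℝ :=
  (1/2) * ∑ d, rndInv x c d *
    (pd a (fun y => rnd y d b) x + pd b (fun y => rnd y d a) x - pd d (fun y => rnd y a b) x)

/-- Covariant derivative `∇_a Y^b` of a vector field. -/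
def cdVec (Y : Pt → Fin 2 → ℝ) (x : Pt) (a b : Fin 2) : ℝ :=
  pd a (fun y => Y y b) x + ∑ c, Gam b a c x * Y x c

/-- Covariant derivative `∇_a ω_b` of a covector field. -/
def cdCov (ω : Pt → Fin 2 → ℝ) (x : Pt) (a b : Fin 2) : ℝ :=
  pd a (fun y => ω y b) x - ∑ c, Gam c a b x * ω x c

/-- Covariant derivative `∇_a T_{bc}` of a (0,2)-tensor. -/
def cdT2 (T : Pt → Fin 2 → Fin 2 → ℝ) (x : Pt) (a b c : Fin 2) : ℝ :=
  pd a (fun y => T y b c) x - ∑ d, Gam d a b x * T x d c - ∑ d, Gam d a c x * T x b d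

/-- Covariant derivative `∇_a T_b{}^c` of a (1,1)-tensor (lower, upper). -/
def cdMix (T : Pt → Fin 2 → Fin 2 → ℝ) (x : Pt) (a b c : Fin 2) : ℝ :=
  pd a (fun y => T y b c) x - ∑ d, Gam d a b x * T x d c + ∑ d, Gam c a d x * T x b d

/-- Covariant Hessian `∇_a ∇_b f`. -/
def hess (f : Pt → ℝ) (x : Pt) (a b : Fin 2) : ℝ := cdCov (fun y c => pd c f y) x a b

/-- Laplace–Beltrami operator `Δf = σ^{ab} ∇_a∇_b f` of the round metric. -/
def lap (f : Pt → ℝ) (x : Pt) : ℝ := ∑ a, ∑ b, rndInv x a b * hess f x a b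

/-- Covariant divergence `∇_A Y^A` of a vector field. -/
def divg (Y : Pt → Fin 2 → ℝ) (x : Pt) : ℝ := ∑ a, cdVec Y x a a

/-- The area density `√(det σ)` of the round metric in stereographic coordinates. -/
def aDen (x : Pt) : ℝ := 4 / (1 + x 0 ^ 2 + x 1 ^ 2) ^ 2

/-- Smoothness of a vector field. -/
def SmoothVec (Y : Pt → Fin 2 → ℝ) : Prop := ∀ b, ContDiff ℝ (⊤ : ℕ∞) (fun x => Y x b)

/-- The conformal Killing equation `∇^A Y^B + ∇^B Y^A = (∇_C Y^C) σ^{AB}` on a set `U`. -/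
def ConformalKilling (Y : Pt → Fin 2 → ℝ) (U : Set Pt) : Prop :=
  ∀ x ∈ U, ∀ A B : Fin 2,
    (∑ c, rndInv x A c * cdVec Y x c B) + (∑ c, rndInv x B c * cdVec Y x c A)
      = divg Y x * rndInv x A B

/-- The curl `ε_{AB} ∇^A Y^B` of a vector field. -/
def curl (Y : Pt → Fin 2 → ℝ) (x : Pt) : ℝ :=
  ∑ a, ∑ b, ∑ c, rndE x a b * rndInv x a c * cdVec Y x c b

/-!
Write `J_B = u ∇_B v - v ∇_B u`, so that `∇^B J_B = u Δv - v Δu`. Since `∇_A∇_B α` is symmetric,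
contracting it with `u ∇_A∇_B v - v ∇_A∇_B u` is the same as contracting it with `∇_A J_B`, and
the contracted Ricci identity `∇^A∇_A∇_B α = ∇_B (Δ + 1) α` gives
`∇_A J_B ∇^A∇^B α = ∇_A (J_B ∇^A∇^B α - J^A (Δ + 1) α) + (∇^B J_B) (Δ + 1) α`.
The trace parts subtract `½ (∇^B J_B) Δα`, which leaves `½ (∇^B J_B) (Δ + 2) α` and the divergence
of a `C¹` vector field whose compact support lies in `U`.
-/

section PartialDerivatives

variable {f g : Pt → ℝ} {x : Pt}

lemma pd_add (hf : DifferentiableAt ℝ f x) (hg : DifferentiableAt ℝ g x) (a : Fin 2) :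
    pd a (fun y => f y + g y) x = pd a f x + pd a g x := by
  simp [pd, fderiv_fun_add hf hg]

lemma pd_sub (hf : DifferentiableAt ℝ f x) (hg : DifferentiableAt ℝ g x) (a : Fin 2) :
    pd a (fun y => f y - g y) x = pd a f x - pd a g x := by
  simp [pd, fderiv_fun_sub hf hg]

lemma pd_mul (hf : DifferentiableAt ℝ f x) (hg : DifferentiableAt ℝ g x) (a : Fin 2) :
    pd a (fun y => f y * g y) x = f x * pd a g x + pd a f x * g x := by
  simp [pd, fderiv_fun_mul hf hg, mul_comm (g x)]

lemma pd_fun_sum {ι : Type*} {s : Finset ι} {F : ι → Pt → ℝ}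
    (hF : ∀ i ∈ s, DifferentiableAt ℝ (F i) x) (a : Fin 2) :
    pd a (fun y => ∑ i ∈ s, F i y) x = ∑ i ∈ s, pd a (F i) x := by
  simp [pd, fderiv_fun_sum hF]

lemma pd_inv (hf : DifferentiableAt ℝ f x) (hx : f x ≠ 0) (a : Fin 2) :
    pd a (fun y => (f y)⁻¹) x = -pd a f x / f x ^ 2 := by
  have h := (hasDerivAt_inv hx).comp_hasFDerivAt x hf.hasFDerivAt
  simp only [pd, show (fun y => (f y)⁻¹) = Inv.inv ∘ f from rfl, h.fderiv]
  simp [div_eq_inv_mul]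

lemma pd_const (c : ℝ) (a : Fin 2) : pd a (fun _ => c) x = 0 := by
  simp [pd]

lemma pd_coord (a b : Fin 2) : pd a (fun y => y b) x = if a = b then 1 else 0 := by
  simp [pd, (hasFDerivAt_apply (𝕜 := ℝ) b x).fderiv, Pi.single_apply, eq_comm]

lemma contDiffAt_pd {m n : WithTop ℕ∞} (hf : ContDiffAt ℝ n f x) (hmn : m + 1 ≤ n) (a : Fin 2) :
    ContDiffAt ℝ m (pd a f) x :=
  (hf.fderiv_right hmn).clm_apply contDiffAt_const

lemma pd_comm (hf : ContDiffAt ℝ 2 f x) (a b : Fin 2) :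
    pd a (pd b f) x = pd b (pd a f) x := by
  have hdf : DifferentiableAt ℝ (fderiv ℝ f) x :=
    (hf.fderiv_right (m := 1) (by norm_num)).differentiableAt (by norm_num)
  have pd_pd (c d : Fin 2) : pd c (pd d f) x
      = fderiv ℝ (fderiv ℝ f) x (Pi.single c 1) (Pi.single d 1) := by
    unfold pd
    rw [fderiv_clm_apply hdf (by fun_prop)]
    simp
  rw [pd_pd, pd_pd, hf.isSymmSndFDerivAt (by simp)]

lemma tsupport_pd_subset (f : Pt → ℝ) (a : Fin 2) : tsupport (pd a f) ⊆ tsupport f :=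
  tsupport_fderiv_apply_subset ℝ _

lemma pd_eq_zero_of_notMem_tsupport (hx : x ∉ tsupport f) (a : Fin 2) : pd a f x = 0 :=
  image_eq_zero_of_notMem_tsupport fun h => hx (tsupport_pd_subset f a h)

lemma integrable_pd (hf : ContDiff ℝ 1 f) (hc : HasCompactSupport f) (a : Fin 2) :
    Integrable (pd a f) :=
  ((hf.continuous_fderiv (by norm_num)).clm_apply continuous_const).integrable_of_hasCompactSupport
    (hc.fderiv_apply ℝ _)

lemma integral_pd_eq_zero (hf : ContDiff ℝ 1 f) (hc : HasCompactSupport f) (a : Fin 2) :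
    ∫ x, pd a f x = 0 := by
  have by_parts := integral_mul_fderiv_eq_neg_fderiv_mul_of_integrable
    (μ := (volume : Measure Pt)) (f := fun _ => (1 : ℝ)) (g := f) (v := Pi.single a 1)
    (by simp) (by simp only [one_mul]; exact integrable_pd hf hc a)
    (by simpa using hf.continuous.integrable_of_hasCompactSupport hc)
    (fun _ _ => differentiableAt_const _) (fun x _ => hf.differentiable (by norm_num) x)
  simpa [pd] using by_parts

end PartialDerivatives

section RoundMetric

lemma aDen_pos (x : Pt) : 0 < aDen x := by
  unfold aDen
  positivity

lemma aDen_ne_zero (x : Pt) : aDen x ≠ 0 := (aDen_pos x).ne'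

@[fun_prop]
lemma contDiff_aDen {n : WithTop ℕ∞} : ContDiff ℝ n aDen := by
  unfold aDen
  exact contDiff_const.div (by fun_prop) fun x => by positivity

@[fun_prop]
lemma contDiff_inv_aDen {n : WithTop ℕ∞} : ContDiff ℝ n fun x => (aDen x)⁻¹ :=
  contDiff_aDen.inv aDen_ne_zero

@[fun_prop]
lemma differentiable_aDen : Differentiable ℝ aDen :=
  contDiff_aDen.differentiable one_ne_zero

@[fun_prop]
lemma differentiable_inv_aDen : Differentiable ℝ fun x => (aDen x)⁻¹ :=
  contDiff_inv_aDen.differentiable one_ne_zero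

lemma pd_inv_one_add_sq (a : Fin 2) (x : Pt) :
    pd a (fun y => (1 + y 0 ^ 2 + y 1 ^ 2)⁻¹) x = -2 * x a / (1 + x 0 ^ 2 + x 1 ^ 2) ^ 2 := by
  have pd_den : pd a (fun y => 1 + y 0 ^ 2 + y 1 ^ 2) x = 2 * x a := by
    simp only [pow_two]
    simp (disch := fun_prop) only [pd_add, pd_mul, pd_const, pd_coord]
    fin_cases a <;>
      simp only [Fin.zero_eta, Fin.mk_one, Fin.isValue, ↓reduceIte, zero_ne_one, one_ne_zero] <;>
      ring
  rw [pd_inv (by fun_prop) (by positivity), pd_den]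
  ring

lemma differentiable_inv_one_add_sq :
    Differentiable ℝ fun x : Pt => (1 + x 0 ^ 2 + x 1 ^ 2)⁻¹ :=
  Differentiable.inv (by fun_prop) fun x => by positivity

lemma pd_aDen (a : Fin 2) (x : Pt) :
    pd a aDen x = -4 * x a / (1 + x 0 ^ 2 + x 1 ^ 2) * aDen x := by
  have aDen_eq : aDen = fun y : Pt =>
      4 * ((1 + y 0 ^ 2 + y 1 ^ 2)⁻¹ * (1 + y 0 ^ 2 + y 1 ^ 2)⁻¹) := by
    ext y
    rw [aDen, ← mul_inv, ← pow_two, div_eq_mul_inv]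
  have h_inv := differentiable_inv_one_add_sq x
  simp only [aDen_eq, pd_mul (differentiableAt_const _) (h_inv.fun_mul h_inv), pd_const,
    pd_mul h_inv h_inv, pd_inv_one_add_sq]
  field_simp
  ring

lemma rnd_eq (x : Pt) (a b : Fin 2) : rnd x a b = aDen x * if a = b then 1 else 0 := rfl

lemma rndInv_eq (x : Pt) (a b : Fin 2) : rndInv x a b = (aDen x)⁻¹ * if a = b then 1 else 0 := by
  rw [rndInv, aDen, inv_div]

lemma pd_rnd (c a b : Fin 2) (x : Pt) :
    pd c (fun y => rnd y a b) x = pd c aDen x * if a = b then 1 else 0 := by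
  simp only [rnd_eq]
  rw [pd_mul (by fun_prop) (by fun_prop), pd_const]
  ring

lemma Gam_eq (c a b : Fin 2) (x : Pt) :
    Gam c a b x = (2 * aDen x)⁻¹ * ((if c = b then pd a aDen x else 0)
      + (if c = a then pd b aDen x else 0) - if a = b then pd c aDen x else 0) := by
  simp only [Gam, rndInv_eq, pd_rnd, mul_ite, mul_one, mul_zero, ite_mul, zero_mul,
    Finset.sum_ite_eq, Finset.mem_univ, if_true]
  ring

end RoundMetric

section Connection

variable {x : Pt}

/-- The vector `ω^b = σ^{bc} ω_c` at `x` obtained from a covector by raising its index. -/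
def raiseIndex (x : Pt) (ω : Fin 2 → ℝ) (b : Fin 2) : ℝ := ∑ c, rndInv x b c * ω c

lemma raiseIndex_apply (x : Pt) (ω : Fin 2 → ℝ) (b : Fin 2) :
    raiseIndex x ω b = (aDen x)⁻¹ * ω b := by
  simp [raiseIndex, rndInv_eq]

lemma aDen_mul_divg {Y : Pt → Fin 2 → ℝ} (hY : ∀ b, DifferentiableAt ℝ (fun y => Y y b) x) :
    aDen x * divg Y x = ∑ a, pd a (fun y => aDen y * Y y a) x := by
  have hx := aDen_ne_zero x
  have leibniz (a : Fin 2) := pd_mul (differentiable_aDen x) (hY a) a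
  simp only [leibniz, divg, cdVec, Gam_eq, Fin.sum_univ_two]
  simp only [↓reduceIte, zero_ne_one, one_ne_zero]
  field_simp
  ring

lemma cdVec_raiseIndex {ω : Pt → Fin 2 → ℝ} (hω : ∀ b, DifferentiableAt ℝ (fun y => ω y b) x)
    (a b : Fin 2) :
    cdVec (fun y => raiseIndex y (ω y)) x a b = raiseIndex x (cdCov ω x a) b := by
  have hx := aDen_ne_zero x
  simp only [cdVec, cdCov, raiseIndex_apply, Gam_eq, Fin.sum_univ_two,
    pd_mul (differentiable_inv_aDen x) (hω b), pd_inv (differentiable_aDen x) hx]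
  fin_cases a <;> fin_cases b <;>
    simp only [Fin.zero_eta, Fin.mk_one, Fin.isValue, ↓reduceIte, zero_ne_one, one_ne_zero] <;>
    field_simp <;> ring

lemma cdMix_raiseIndex {T : Pt → Fin 2 → Fin 2 → ℝ}
    (hT : ∀ b c, DifferentiableAt ℝ (fun y => T y b c) x) (a b c : Fin 2) :
    cdMix (fun y d => raiseIndex y (T y d)) x a b c = raiseIndex x (cdT2 T x a b) c := by
  have hx := aDen_ne_zero x
  simp only [cdMix, cdT2, raiseIndex_apply, Gam_eq, Fin.sum_univ_two,
    pd_mul (differentiable_inv_aDen x) (hT b c), pd_inv (differentiable_aDen x) hx]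
  fin_cases a <;> fin_cases b <;> fin_cases c <;>
    simp only [Fin.zero_eta, Fin.mk_one, Fin.isValue, ↓reduceIte, zero_ne_one, one_ne_zero] <;>
    field_simp <;> ring

lemma divg_raiseIndex {ω : Pt → Fin 2 → ℝ} (hω : ∀ b, DifferentiableAt ℝ (fun y => ω y b) x) :
    divg (fun y => raiseIndex y (ω y)) x = ∑ a, ∑ b, rndInv x a b * cdCov ω x a b := by
  simp only [divg, cdVec_raiseIndex hω, raiseIndex]

lemma divg_sub {Y Z : Pt → Fin 2 → ℝ} (hY : ∀ b, DifferentiableAt ℝ (fun y => Y y b) x)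
    (hZ : ∀ b, DifferentiableAt ℝ (fun y => Z y b) x) :
    divg (fun y b => Y y b - Z y b) x = divg Y x - divg Z x := by
  simp only [divg, cdVec, pd_sub (hY _) (hZ _), Fin.sum_univ_two]
  ring

lemma divg_mul {f : Pt → ℝ} {Y : Pt → Fin 2 → ℝ} (hf : DifferentiableAt ℝ f x)
    (hY : ∀ b, DifferentiableAt ℝ (fun y => Y y b) x) :
    divg (fun y b => f y * Y y b) x = f x * divg Y x + ∑ b, pd b f x * Y x b := by
  simp only [divg, cdVec, pd_mul hf (hY _), Fin.sum_univ_two]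
  ring

lemma divg_contract {T : Pt → Fin 2 → Fin 2 → ℝ} {Y : Pt → Fin 2 → ℝ}
    (hT : ∀ b c, DifferentiableAt ℝ (fun y => T y b c) x)
    (hY : ∀ b, DifferentiableAt ℝ (fun y => Y y b) x) :
    divg (fun y c => ∑ b, T y b c * Y y b) x
      = ∑ b, (∑ a, cdMix T x a b a) * Y x b + ∑ a, ∑ b, T x b a * cdVec Y x a b := by
  have leibniz (c : Fin 2) :
      pd c (fun y => ∑ b, T y b c * Y y b) x
        = ∑ b, (T x b c * pd c (fun y => Y y b) x + pd c (fun y => T y b c) x * Y x b) := by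
    rw [pd_fun_sum fun b _ => (hT b c).fun_mul (hY b)]
    simp only [pd_mul (hT _ c) (hY _)]
  simp only [divg, cdVec, cdMix, leibniz]
  simp only [Fin.sum_univ_two]
  ring

-- For a conformally flat metric `∑ a, Γ^d_{aa}` is a multiple of `dim - 2`, so it vanishes here.
lemma sum_cdT2_of_symm {T : Pt → Fin 2 → Fin 2 → ℝ} (hT : ∀ b c, T x b c = T x c b) (b : Fin 2) :
    ∑ a, cdT2 T x a b a
      = ∑ a, pd a (fun y => T y b a) x - pd b aDen x / (2 * aDen x) * ∑ a, T x a a := by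
  have hx := aDen_ne_zero x
  simp only [cdT2, Gam_eq, Fin.sum_univ_two, hT 1 0]
  fin_cases b <;>
    simp only [Fin.zero_eta, Fin.mk_one, Fin.isValue, ↓reduceIte, zero_ne_one, one_ne_zero] <;>
    field_simp <;> ring

end Connection

section Hessian

variable {f : Pt → ℝ} {x : Pt}

/-- The symmetric tensor `x_a ∂_b f + x_b ∂_a f - δ_{ab} x^c ∂_c f`, indices being moved with the
Euclidean metric of the chart; it is `(1 + |x|²) / 2` times the first-order part `-Γ^c_{ab} ∂_c f`
of the covariant Hessian. -/
def hessFirstOrder (f : Pt → ℝ) (x : Pt) (a b : Fin 2) : ℝ :=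
  x a * pd b f x + x b * pd a f x - if a = b then ∑ c, x c * pd c f x else 0

lemma hess_eq (f : Pt → ℝ) (x : Pt) (a b : Fin 2) :
    hess f x a b
      = pd a (pd b f) x + 2 * (1 + x 0 ^ 2 + x 1 ^ 2)⁻¹ * hessFirstOrder f x a b := by
  have hx := aDen_ne_zero x
  simp only [hess, cdCov, Gam_eq, pd_aDen, hessFirstOrder, Fin.sum_univ_two]
  fin_cases a <;> fin_cases b <;>
    simp only [Fin.zero_eta, Fin.mk_one, Fin.isValue, ↓reduceIte, zero_ne_one, one_ne_zero] <;>
    field_simp <;> ring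

lemma hessFirstOrder_symm (f : Pt → ℝ) (x : Pt) (a b : Fin 2) :
    hessFirstOrder f x a b = hessFirstOrder f x b a := by
  simp only [hessFirstOrder, eq_comm (a := a), add_comm (x a * _)]

lemma sum_hessFirstOrder (f : Pt → ℝ) (x : Pt) : ∑ a, hessFirstOrder f x a a = 0 := by
  simp only [hessFirstOrder, Fin.sum_univ_two, if_true]
  ring

lemma sum_coord_mul_hessFirstOrder (f : Pt → ℝ) (x : Pt) (b : Fin 2) :
    ∑ a, x a * hessFirstOrder f x b a = (x 0 ^ 2 + x 1 ^ 2) * pd b f x := by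
  simp only [hessFirstOrder, Fin.sum_univ_two]
  fin_cases b <;>
    simp only [Fin.zero_eta, Fin.mk_one, Fin.isValue, ↓reduceIte, zero_ne_one, one_ne_zero] <;>
    ring

lemma contDiffAt_hessFirstOrder {m n : WithTop ℕ∞} (hf : ContDiffAt ℝ n f x) (hmn : m + 1 ≤ n)
    (a b : Fin 2) : ContDiffAt ℝ m (fun y => hessFirstOrder f y a b) x := by
  have hpd (c : Fin 2) := contDiffAt_pd hf hmn c
  unfold hessFirstOrder
  split_ifs <;> fun_prop

lemma sum_pd_hessFirstOrder (hf : ContDiffAt ℝ 2 f x) (b : Fin 2) :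
    ∑ a, pd a (fun y => hessFirstOrder f y b a) x
      = x b * ∑ a, pd a (pd a f) x + 2 * pd b f x := by
  have hpd (a : Fin 2) : DifferentiableAt ℝ (pd a f) x :=
    (contDiffAt_pd hf (m := 1) (by norm_num) a).differentiableAt one_ne_zero
  simp only [hessFirstOrder, Fin.sum_univ_two]
  fin_cases b <;>
  · simp (disch := fun_prop) only [Fin.zero_eta, Fin.mk_one, Fin.isValue, ↓reduceIte, zero_ne_one,
      one_ne_zero, sub_zero, add_sub_add_left_eq_sub, add_sub_add_right_eq_sub, pd_add, pd_sub,
      pd_mul, pd_coord]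
    simp only [pd_comm hf 1 0]
    ring

lemma hess_symm (hf : ContDiffAt ℝ 2 f x) (a b : Fin 2) : hess f x a b = hess f x b a := by
  rw [hess_eq, hess_eq, pd_comm hf, hessFirstOrder_symm]

lemma lap_eq_sum_hess (f : Pt → ℝ) (x : Pt) : lap f x = (aDen x)⁻¹ * ∑ a, hess f x a a := by
  simp [lap, rndInv_eq, mul_add]

lemma aDen_mul_lap (f : Pt → ℝ) (x : Pt) : aDen x * lap f x = ∑ a, pd a (pd a f) x := by
  rw [lap_eq_sum_hess, mul_inv_cancel_left₀ (aDen_ne_zero x)]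
  simp only [hess_eq, Finset.sum_add_distrib, ← Finset.mul_sum, sum_hessFirstOrder, mul_zero,
    add_zero]

lemma contDiffAt_hess {m n : WithTop ℕ∞} (hf : ContDiffAt ℝ n f x) (hmn : m + 2 ≤ n)
    (a b : Fin 2) : ContDiffAt ℝ m (fun y => hess f y a b) x := by
  have hmn' : m + 1 + 1 ≤ n := by rwa [add_assoc, one_add_one_eq_two]
  have hpd2 := contDiffAt_pd (contDiffAt_pd hf hmn' b) le_rfl a
  have hfirst := contDiffAt_hessFirstOrder hf (le_self_add.trans hmn') a b
  have h_inv : ContDiffAt ℝ m (fun y : Pt => (1 + y 0 ^ 2 + y 1 ^ 2)⁻¹) x :=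
    ContDiffAt.inv (by fun_prop) (by positivity)
  simp only [hess_eq]
  fun_prop

lemma contDiffAt_lap {m n : WithTop ℕ∞} (hf : ContDiffAt ℝ n f x) (hmn : m + 2 ≤ n) :
    ContDiffAt ℝ m (lap f) x := by
  have hh (a : Fin 2) := contDiffAt_hess hf hmn a a
  rw [show lap f = _ from funext (lap_eq_sum_hess f)]
  exact contDiff_inv_aDen.contDiffAt.mul (ContDiffAt.sum fun a _ => hh a)

lemma sum_pd_pd_pd (hf : ContDiffAt ℝ 3 f x) (b : Fin 2) :
    ∑ a, pd a (pd b (pd a f)) x = aDen x * pd b (lap f) x + pd b aDen x * lap f x := by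
  have hpd (a : Fin 2) : ContDiffAt ℝ 2 (pd a f) x := contDiffAt_pd hf (by norm_num) a
  have hpd2 (a : Fin 2) : DifferentiableAt ℝ (pd a (pd a f)) x :=
    (contDiffAt_pd (m := 1) (hpd a) (by norm_num) a).differentiableAt one_ne_zero
  have hlap : DifferentiableAt ℝ (lap f) x :=
    (contDiffAt_lap (m := 1) hf (by norm_num)).differentiableAt one_ne_zero
  calc ∑ a, pd a (pd b (pd a f)) x
      = ∑ a, pd b (pd a (pd a f)) x := by simp only [pd_comm (hpd _) _ b]
    _ = pd b (fun y => aDen y * lap f y) x := by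
        simp only [aDen_mul_lap, pd_fun_sum fun a _ => hpd2 a]
    _ = _ := pd_mul (differentiable_aDen x) hlap b

lemma sum_pd_hess (hf : ContDiffAt ℝ 3 f x) (b : Fin 2) :
    ∑ a, pd a (fun y => hess f y b a) x
      = aDen x * (pd b (lap f) x + pd b f x) + pd b aDen x / 2 * lap f x := by
  have hf2 : ContDiffAt ℝ 2 f x := hf.of_le (by norm_num)
  have hpd2 (a : Fin 2) : DifferentiableAt ℝ (pd b (pd a f)) x :=
    (contDiffAt_pd (m := 1) (contDiffAt_pd (m := 2) hf (by norm_num) a) (by norm_num) b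
      ).differentiableAt one_ne_zero
  have hfirst (a : Fin 2) : DifferentiableAt ℝ (fun y => hessFirstOrder f y b a) x :=
    (contDiffAt_hessFirstOrder (m := 1) hf2 (by norm_num) b a).differentiableAt one_ne_zero
  have h_inv := differentiable_inv_one_add_sq x
  have pd_hess (a : Fin 2) : pd a (fun y => hess f y b a) x
      = pd a (pd b (pd a f)) x
        + 2 * (1 + x 0 ^ 2 + x 1 ^ 2)⁻¹ * pd a (fun y => hessFirstOrder f y b a) x
        - 4 / (1 + x 0 ^ 2 + x 1 ^ 2) ^ 2 * (x a * hessFirstOrder f x b a) := by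
    simp only [hess_eq]
    rw [pd_add (hpd2 a) ((h_inv.const_mul 2).fun_mul (hfirst a)),
      pd_mul (h_inv.const_mul 2) (hfirst a), pd_mul (differentiableAt_const _) h_inv, pd_const,
      pd_inv_one_add_sq]
    ring
  simp only [pd_hess, Finset.sum_sub_distrib, Finset.sum_add_distrib, ← Finset.mul_sum,
    sum_pd_pd_pd hf, sum_pd_hessFirstOrder hf2, sum_coord_mul_hessFirstOrder, ← aDen_mul_lap,
    pd_aDen]
  unfold aDen
  field_simp
  ring

theorem contracted_ricci_identity (hf : ContDiffAt ℝ 3 f x) (b : Fin 2) :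
    ∑ a, raiseIndex x (cdT2 (hess f) x a b) a = pd b (fun y => lap f y + f y) x := by
  have hlap : DifferentiableAt ℝ (lap f) x :=
    (contDiffAt_lap (m := 1) hf (by norm_num)).differentiableAt one_ne_zero
  have hx := aDen_ne_zero x
  have hsymm := hess_symm (hf.of_le (by norm_num : (2 : WithTop ℕ∞) ≤ 3))
  have htrace : ∑ a, hess f x a a = aDen x * lap f x := by
    rw [lap_eq_sum_hess, mul_inv_cancel_left₀ hx]
  simp only [raiseIndex_apply, ← Finset.mul_sum]
  rw [sum_cdT2_of_symm hsymm, sum_pd_hess hf, htrace,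
    pd_add hlap (hf.differentiableAt (by norm_num))]
  field_simp
  ring

end Hessian

section Wronskian

variable {u v : Pt → ℝ} {x : Pt}

/-- The covector field `u ∇_b v - v ∇_b u`, whose divergence is the Green integrand
`u Δv - v Δu`. -/
def wronskian (u v : Pt → ℝ) (x : Pt) (b : Fin 2) : ℝ := u x * pd b v x - v x * pd b u x

lemma contDiffAt_wronskian {m n : WithTop ℕ∞} (hu : ContDiffAt ℝ n u x) (hv : ContDiffAt ℝ n v x)
    (hmn : m + 1 ≤ n) (b : Fin 2) : ContDiffAt ℝ m (fun y => wronskian u v y b) x := by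
  have hu' := contDiffAt_pd hu hmn b
  have hv' := contDiffAt_pd hv hmn b
  have hu₀ : ContDiffAt ℝ m u x := hu.of_le (le_self_add.trans hmn)
  have hv₀ : ContDiffAt ℝ m v x := hv.of_le (le_self_add.trans hmn)
  unfold wronskian
  fun_prop

lemma wronskian_eq_zero_of_notMem_tsupport (hx : x ∉ tsupport v) : wronskian u v x = 0 := by
  ext b
  simp [wronskian, image_eq_zero_of_notMem_tsupport hx, pd_eq_zero_of_notMem_tsupport hx]

lemma cdCov_wronskian (hu : ContDiffAt ℝ 2 u x) (hv : ContDiffAt ℝ 2 v x) (a b : Fin 2) :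
    cdCov (wronskian u v) x a b = u x * hess v x a b - v x * hess u x a b
      + (pd a u x * pd b v x - pd a v x * pd b u x) := by
  have hu₀ := hu.differentiableAt two_ne_zero
  have hv₀ := hv.differentiableAt two_ne_zero
  have hu' : DifferentiableAt ℝ (pd b u) x :=
    (contDiffAt_pd hu (m := 1) (by norm_num) b).differentiableAt one_ne_zero
  have hv' : DifferentiableAt ℝ (pd b v) x :=
    (contDiffAt_pd hv (m := 1) (by norm_num) b).differentiableAt one_ne_zero
  simp only [cdCov, hess, wronskian, Fin.sum_univ_two]
  rw [pd_sub (hu₀.fun_mul hv') (hv₀.fun_mul hu'), pd_mul hu₀ hv', pd_mul hv₀ hu']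
  ring

lemma sum_symm_mul_cdCov_wronskian (hu : ContDiffAt ℝ 2 u x) (hv : ContDiffAt ℝ 2 v x)
    {S : Fin 2 → Fin 2 → ℝ} (hS : ∀ a b, S a b = S b a) :
    ∑ a, ∑ b, S a b * cdCov (wronskian u v) x a b
      = ∑ a, ∑ b, S a b * (u x * hess v x a b - v x * hess u x a b) := by
  simp only [cdCov_wronskian hu hv, Fin.sum_univ_two, hS 1 0]
  ring

lemma divg_raiseIndex_wronskian (hu : ContDiffAt ℝ 2 u x) (hv : ContDiffAt ℝ 2 v x) :
    divg (fun y => raiseIndex y (wronskian u v y)) x = u x * lap v x - v x * lap u x := by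
  have hJ (b : Fin 2) : DifferentiableAt ℝ (fun y => wronskian u v y b) x :=
    (contDiffAt_wronskian (m := 1) hu hv (by norm_num) b).differentiableAt one_ne_zero
  have hS (a b : Fin 2) : rndInv x a b = rndInv x b a := by simp only [rndInv, eq_comm]
  rw [divg_raiseIndex hJ, sum_symm_mul_cdCov_wronskian hu hv hS]
  simp only [lap, Fin.sum_univ_two]
  ring

end Wronskian

section HessianFlux

variable {f u v : Pt → ℝ} {Y : Pt → Fin 2 → ℝ} {x : Pt}

/-- The vector field `Y^b ∇_b∇^c f - (Δf + f) Y^c`. By the contracted Ricci identity its divergence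
involves only first derivatives of `Y` and second derivatives of `f`. -/
def hessFlux (f : Pt → ℝ) (Y : Pt → Fin 2 → ℝ) (x : Pt) (c : Fin 2) : ℝ :=
  ∑ b, raiseIndex x (hess f x b) c * Y x b - (lap f x + f x) * Y x c

lemma contDiffAt_raiseIndex {m : WithTop ℕ∞} {ω : Pt → Fin 2 → ℝ} {b : Fin 2}
    (hω : ContDiffAt ℝ m (fun y => ω y b) x) :
    ContDiffAt ℝ m (fun y => raiseIndex y (ω y) b) x := by
  simp only [raiseIndex_apply]
  exact contDiff_inv_aDen.contDiffAt.mul hω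

lemma contDiffAt_hessFlux {m n : WithTop ℕ∞} (hf : ContDiffAt ℝ n f x) (hmn : m + 2 ≤ n)
    (hY : ∀ b, ContDiffAt ℝ m (fun y => Y y b) x) : ContDiffAt ℝ m (hessFlux f Y) x := by
  have hT (b c : Fin 2) := contDiffAt_raiseIndex (contDiffAt_hess hf hmn b c)
  have hlap := contDiffAt_lap hf hmn
  have hf₀ : ContDiffAt ℝ m f x := hf.of_le (le_self_add.trans hmn)
  refine contDiffAt_pi.2 fun c => ?_
  exact (ContDiffAt.sum fun b _ => (hT b c).mul (hY b)).sub ((hlap.add hf₀).mul (hY c))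

lemma divg_hessFlux (hf : ContDiffAt ℝ 3 f x) (hY : ∀ b, DifferentiableAt ℝ (fun y => Y y b) x) :
    divg (hessFlux f Y) x
      = ∑ a, ∑ b, raiseIndex x (hess f x b) a * cdVec Y x a b - (lap f x + f x) * divg Y x := by
  have hhess (b c : Fin 2) : ContDiffAt ℝ 1 (fun y => hess f y b c) x :=
    contDiffAt_hess hf (by norm_num) b c
  have hT (b c : Fin 2) : DifferentiableAt ℝ (fun y => raiseIndex y (hess f y b) c) x :=
    (contDiffAt_raiseIndex (hhess b c)).differentiableAt one_ne_zero
  have hscal : DifferentiableAt ℝ (fun y => lap f y + f y) x :=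
    ((contDiffAt_lap (m := 1) hf (by norm_num)).differentiableAt one_ne_zero).add
      (hf.differentiableAt (by norm_num))
  have hTY (c : Fin 2) : DifferentiableAt ℝ (fun y => ∑ b, raiseIndex y (hess f y b) c * Y y b) x :=
    DifferentiableAt.fun_sum fun b _ => (hT b c).mul (hY b)
  have div_hess (b : Fin 2) : ∑ a, cdMix (fun y b => raiseIndex y (hess f y b)) x a b a
      = pd b (fun y => lap f y + f y) x := by
    rw [← contracted_ricci_identity hf]
    exact Finset.sum_congr rfl fun a _ =>
      cdMix_raiseIndex (fun b c => (hhess b c).differentiableAt one_ne_zero) a b a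
  unfold hessFlux
  rw [divg_sub hTY fun c => hscal.fun_mul (hY c), divg_contract hT hY, divg_mul hscal hY]
  simp only [div_hess]
  ring

lemma sum_rndInv_mul_rndInv_mul (x : Pt) (T : Fin 2 → Fin 2 → ℝ) (A B : Fin 2) :
    ∑ a, ∑ b, rndInv x A a * rndInv x B b * T a b = (aDen x)⁻¹ ^ 2 * T A B := by
  simp [rndInv_eq, pow_two]

lemma tracelessHessian_pairing_eq (hu : ContDiffAt ℝ 2 u x) (hv : ContDiffAt ℝ 2 v x)
    (hf : ContDiffAt ℝ 3 f x) :
    ∑ A, ∑ B,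
      (u x * (hess v x A B - (1/2) * lap v x * rnd x A B)
        - v x * (hess u x A B - (1/2) * lap u x * rnd x A B))
      * (∑ a, ∑ b, rndInv x A a * rndInv x B b * hess f x a b)
    = (1/2) * ((u x * lap v x - v x * lap u x) * (lap f x + 2 * f x))
      + divg (hessFlux f fun y => raiseIndex y (wronskian u v y)) x := by
  have hJ (b : Fin 2) : ContDiffAt ℝ 1 (fun y => wronskian u v y b) x :=
    contDiffAt_wronskian hu hv (by norm_num) b
  have hx := aDen_ne_zero x
  have hsymm := hess_symm (hf.of_le (by norm_num : (2 : WithTop ℕ∞) ≤ 3))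
  have pairing_cdVec :
      ∑ a, ∑ b, raiseIndex x (hess f x b) a * cdVec (fun y => raiseIndex y (wronskian u v y)) x a b
        = (aDen x)⁻¹ ^ 2 * ∑ a, ∑ b, hess f x a b * (u x * hess v x a b - v x * hess u x a b) := by
    rw [← sum_symm_mul_cdCov_wronskian hu hv hsymm]
    simp only [cdVec_raiseIndex fun b => (hJ b).differentiableAt one_ne_zero, raiseIndex_apply,
      Fin.sum_univ_two, hsymm 1 0]
    ring
  rw [divg_hessFlux hf fun b => (contDiffAt_raiseIndex (hJ b)).differentiableAt one_ne_zero,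
    divg_raiseIndex_wronskian hu hv, pairing_cdVec, lap_eq_sum_hess f]
  simp only [sum_rndInv_mul_rndInv_mul, rnd_eq]
  simp only [Fin.sum_univ_two]
  simp only [↓reduceIte, zero_ne_one, one_ne_zero]
  field_simp
  ring

end HessianFlux

section Integration

variable {U : Set Pt}

lemma contDiff_aDen_mul {Y : Pt → Fin 2 → ℝ} (hY : ContDiff ℝ 1 Y) (a : Fin 2) :
    ContDiff ℝ 1 fun y => aDen y * Y y a :=
  contDiff_aDen.mul (contDiff_pi.1 hY a)

lemma tsupport_aDen_mul_subset (Y : Pt → Fin 2 → ℝ) (a : Fin 2) :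
    tsupport (fun y => aDen y * Y y a) ⊆ tsupport Y :=
  closure_mono fun x hx hYx => hx (by simp [hYx])

lemma divg_mul_aDen_eq {Y : Pt → Fin 2 → ℝ} (hY : ContDiff ℝ 1 Y) :
    (fun x => divg Y x * aDen x) = fun x => ∑ a, pd a (fun y => aDen y * Y y a) x := by
  ext x
  rw [mul_comm, aDen_mul_divg fun b => (contDiff_pi.1 hY b).differentiable one_ne_zero x]

lemma integrable_divg_mul_aDen {Y : Pt → Fin 2 → ℝ} (hY : ContDiff ℝ 1 Y)
    (hc : HasCompactSupport Y) : Integrable fun x => divg Y x * aDen x := by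
  rw [divg_mul_aDen_eq hY]
  exact integrable_finsetSum _ fun a _ => integrable_pd (contDiff_aDen_mul hY a)
    (hc.of_isClosed_subset (isClosed_tsupport _) (tsupport_aDen_mul_subset Y a)) a

theorem setIntegral_divg_mul_aDen_eq_zero {Y : Pt → Fin 2 → ℝ} (hY : ContDiff ℝ 1 Y)
    (hc : HasCompactSupport Y) (hYU : tsupport Y ⊆ U) : ∫ x in U, divg Y x * aDen x = 0 := by
  have hsub (a : Fin 2) := tsupport_aDen_mul_subset Y a
  have hcomp (a : Fin 2) : HasCompactSupport fun y => aDen y * Y y a :=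
    hc.of_isClosed_subset (isClosed_tsupport _) (hsub a)
  have hint (a : Fin 2) := integrable_pd (contDiff_aDen_mul hY a) (hcomp a) a
  rw [divg_mul_aDen_eq hY, setIntegral_eq_integral_of_forall_compl_eq_zero,
    integral_finsetSum _ fun a _ => hint a]
  · exact Finset.sum_eq_zero fun a _ => integral_pd_eq_zero (contDiff_aDen_mul hY a) (hcomp a) a
  · exact fun x hx => Finset.sum_eq_zero fun a _ =>
      pd_eq_zero_of_notMem_tsupport (fun h => hx (hYU (hsub a h))) a

end Integration

section Pairing

variable {U : Set Pt} {u v α : Pt → ℝ}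

lemma lap_eq_zero_of_notMem_tsupport {x : Pt} (hx : x ∉ tsupport v) : lap v x = 0 := by
  have pd_pd_eq_zero (a : Fin 2) : pd a (pd a v) x = 0 :=
    pd_eq_zero_of_notMem_tsupport (fun h => hx (tsupport_pd_subset v a h)) a
  have h := aDen_mul_lap v x
  simp only [pd_pd_eq_zero, Finset.sum_const_zero] at h
  exact (mul_eq_zero.1 h).resolve_left (aDen_ne_zero x)

lemma tsupport_hessFlux_wronskian_subset (u v α : Pt → ℝ) :
    tsupport (hessFlux α fun y => raiseIndex y (wronskian u v y)) ⊆ tsupport v := by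
  refine closure_minimal (fun x hx => ?_) (isClosed_tsupport v)
  by_contra hxv
  refine hx (funext fun c => ?_)
  simp [hessFlux, raiseIndex_apply, wronskian_eq_zero_of_notMem_tsupport hxv]

lemma contDiff_hessFlux_wronskian (hU : IsOpen U) (hu : ContDiffOn ℝ 2 u U) (hv : ContDiff ℝ 2 v)
    (hα : ContDiffOn ℝ 3 α U) (hvU : tsupport v ⊆ U) :
    ContDiff ℝ 1 (hessFlux α fun y => raiseIndex y (wronskian u v y)) := by
  refine (contMDiff_of_tsupport fun x hx => ContDiffAt.contMDiffAt ?_).contDiff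
  have hxU := hU.mem_nhds (hvU (tsupport_hessFlux_wronskian_subset u v α hx))
  exact contDiffAt_hessFlux (hα.contDiffAt hxU) (by norm_num) fun b =>
    contDiffAt_raiseIndex (contDiffAt_wronskian (hu.contDiffAt hxU) hv.contDiffAt (by norm_num) b)

lemma integrable_green_mul (hU : IsOpen U) (hu : ContDiffOn ℝ 2 u U) (hv : ContDiff ℝ 2 v)
    (hvsupp : HasCompactSupport v) (hvU : tsupport v ⊆ U) (hα : ContDiffOn ℝ 2 α U) :
    Integrable fun x => (u x * lap v x - v x * lap u x) * (lap α x + 2 * α x) * aDen x := by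
  set G := fun x => (u x * lap v x - v x * lap u x) * (lap α x + 2 * α x) * aDen x
  have hG : ∀ x ∉ tsupport v, G x = 0 := fun x hx => by
    simp [G, image_eq_zero_of_notMem_tsupport hx, lap_eq_zero_of_notMem_tsupport hx]
  have hGv : tsupport G ⊆ tsupport v :=
    closure_minimal (fun x hx => not_imp_comm.1 (hG x) hx) (isClosed_tsupport v)
  have hcont : Continuous G := by
    refine continuous_of_tsupport fun x hx => ?_
    have hxU := hU.mem_nhds (hvU (hGv hx))
    have continuousAt_lap {f : Pt → ℝ} (hf : ContDiffAt ℝ 2 f x) : ContinuousAt (lap f) x :=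
      (contDiffAt_lap (m := 0) hf (by norm_num)).continuousAt
    have hux := hu.contDiffAt hxU
    have hvx : ContDiffAt ℝ 2 v x := hv.contDiffAt
    have hαx := hα.contDiffAt hxU
    exact (((hux.continuousAt.mul (continuousAt_lap hvx)).sub
      (hvx.continuousAt.mul (continuousAt_lap hux))).mul
      ((continuousAt_lap hαx).add (hαx.continuousAt.const_mul 2))).mul
      differentiable_aDen.continuous.continuousAt
  exact hcont.integrable_of_hasCompactSupport (HasCompactSupport.intro hvsupp hG)

theorem symmetric_traceless_hessian_pairing_general
    (hU : IsOpen U) (hu : ContDiffOn ℝ 2 u U) (hv : ContDiff ℝ 2 v)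
    (hvsupp : HasCompactSupport v) (hvU : tsupport v ⊆ U) (hα : ContDiffOn ℝ 3 α U) :
    (∫ x in U,
      (∑ A, ∑ B,
        (u x * (hess v x A B - (1/2) * lap v x * rnd x A B)
          - v x * (hess u x A B - (1/2) * lap u x * rnd x A B))
        * (∑ a, ∑ b, rndInv x A a * rndInv x B b * hess α x a b)) * aDen x)
    = (1/2) * ∫ x in U, (u x * lap v x - v x * lap u x) * (lap α x + 2 * α x) * aDen x := by
  let F := hessFlux α fun y => raiseIndex y (wronskian u v y)
  have hFv : tsupport F ⊆ tsupport v := tsupport_hessFlux_wronskian_subset u v α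
  have hF : ContDiff ℝ 1 F := contDiff_hessFlux_wronskian hU hu hv hα hvU
  have hFc : HasCompactSupport F := hvsupp.of_isClosed_subset (isClosed_tsupport F) hFv
  have hG := integrable_green_mul hU hu hv hvsupp hvU (hα.of_le (by norm_num))
  calc _ = ∫ x in U, ((1/2) * ((u x * lap v x - v x * lap u x) * (lap α x + 2 * α x) * aDen x)
          + divg F x * aDen x) := by
        refine setIntegral_congr_fun hU.measurableSet fun x hx => ?_
        have hxU := hU.mem_nhds hx
        simp only [F, tracelessHessian_pairing_eq (hu.contDiffAt hxU) hv.contDiffAt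
          (hα.contDiffAt hxU)]
        ring
    _ = _ := by
        rw [integral_add (hG.const_mul _).integrableOn
            (integrable_divg_mul_aDen hF hFc).integrableOn,
          setIntegral_divg_mul_aDen_eq_zero hF hFc (hFv.trans hvU), add_zero, integral_const_mul]

end Pairing

/-- for `u, v` smooth on `S²` with `v` compactly supported in an open set
`U ⊆ S²` and `α` smooth on `U`,
`∫_U [u(∇_A∇_B v - ½(Δv)σ_{AB}) - v(∇_A∇_B u - ½(Δu)σ_{AB})] ∇^A∇^B α
  = ½ ∫_U (uΔv - vΔu)(Δ+2)α`. -/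
theorem symmetric_traceless_hessian_pairing
    (U : Set Pt) (hU : IsOpen U)
    (u v : Pt → ℝ) (hu : ContDiff ℝ (⊤ : ℕ∞) u) (hv : ContDiff ℝ (⊤ : ℕ∞) v)
    (hvsupp : HasCompactSupport v) (hvU : tsupport v ⊆ U)
    (α : Pt → ℝ) (hα : ContDiffOn ℝ (⊤ : ℕ∞) α U) :
    (∫ x in U,
      (∑ A, ∑ B,
        (u x * (hess v x A B - (1/2) * lap v x * rnd x A B)
          - v x * (hess u x A B - (1/2) * lap u x * rnd x A B))
        * (∑ a, ∑ b, rndInv x A a * rndInv x B b * hess α x a b)) * aDen x)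
    = (1/2) * ∫ x in U, (u x * lap v x - v x * lap u x) * (lap α x + 2 * α x) * aDen x := by
  exact symmetric_traceless_hessian_pairing_general hU (hu.of_le (by norm_cast)).contDiffOn
    (hv.of_le (by norm_cast)) hvsupp hvU (hα.of_le (by norm_cast))
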